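/- Let n ∈ ℕ, let H: ℝ^{2n} → ℝ be differentiable, and let L ∈ ℝ be such that H_L(x) := H(x) + (1/2)L·|x|² is convex on ℝ^{2n}. Define the Fenchel conjugate H_L*(y) = sup_{z ∈ ℝ^{2n}} ((z, y) − H_L(z)). If x: ℝ → ℝ^{2n} is differentiable and satisfies ẋ(t) = J∇H(x(t)) for all t, then for every t the supremum defining H_L*(−Jẋ(t) + L·x(t)) is attained at x(t) and (1/2)(Jẋ(t) − L·x(t), x(t)) + H_L*(−Jẋ(t) + L·x(t)) = −(1/2)(Jẋ(t), x(t)) − H(x(t)); in particular the left-hand side is independent of L. -/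

import Mathlib

open RealInnerProductSpace

/-- The standard symplectic matrix `J = [[0, -I_n], [I_n, 0]]` acting on
`ℝ^{2n}`. -/
noncomputable def symplJ (n : ℕ) (x : EuclideanSpace ℝ (Fin (2 * n))) :
    EuclideanSpace ℝ (Fin (2 * n)) :=
  WithLp.toLp 2 fun i => if h : (i : ℕ) < n then -x ⟨(i : ℕ) + n, by omega⟩
           else x ⟨(i : ℕ) - n, by have := i.isLt; omega⟩

/-!
Since `J² = -1`, a solution of `ẋ = J∇H(x)` has `-Jẋ + Lx = ∇H(x) + Lx = ∇H_L(x)`. A convex function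
lies above its tangent hyperplanes, so `z ↦ (z, ∇H_L(x)) - H_L(z)` is maximal at `z = x`. In the
resulting value of the integrand, the terms `(L/2)|x|²` cancel.
-/

theorem symplJ_symplJ (n : ℕ) (w : EuclideanSpace ℝ (Fin (2 * n))) :
    symplJ n (symplJ n w) = -w := by
  ext i
  by_cases hi : (i : ℕ) < n
  · simp [symplJ, hi]
  · have hsub : (i : ℕ) - n < n := by omega
    have hadd : (i : ℕ) - n + n = i := by omega
    simp [symplJ, hi, hsub, hadd]

section NormedSpace

variable {E : Type*} [NormedAddCommGroup E] [NormedSpace ℝ E]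
  {s : Set E} {f : E → ℝ} {f' : E →L[ℝ] ℝ} {p : E}

theorem add_apply_sub_le_of_convexOn_of_hasFDerivWithinAt (hf : ConvexOn ℝ s f)
    (hf' : HasFDerivWithinAt f f' s p) (hp : p ∈ s) {z : E} (hz : z ∈ s) :
    f p + f' (z - p) ≤ f z := by
  let ℓ : ℝ →ᵃ[ℝ] E := AffineMap.lineMap p z
  have hℓ₀ : ℓ 0 = p := AffineMap.lineMap_apply_zero p z
  have hℓ₁ : ℓ 1 = z := AffineMap.lineMap_apply_one p z
  have hconv : ConvexOn ℝ (ℓ ⁻¹' s) (f ∘ ℓ) := hf.comp_affineMap ℓ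
  have hderiv : HasDerivWithinAt (f ∘ ℓ) (f' (z - p)) (ℓ ⁻¹' s) 0 :=
    (hℓ₀.symm ▸ hf').comp_hasDerivWithinAt 0 AffineMap.hasDerivWithinAt_lineMap
      (Set.mapsTo_preimage ℓ s)
  have hslope : f' (z - p) ≤ slope (f ∘ ℓ) 0 1 :=
    hconv.le_slope_of_hasDerivWithinAt (by simpa [hℓ₀]) (by simpa [hℓ₁]) one_pos hderiv
  have hslope_eq : slope (f ∘ ℓ) 0 1 = f z - f p := by
    simp [slope_def_field, hℓ₀, hℓ₁]
  linarith

theorem isGreatest_apply_sub_of_convexOn_of_hasFDerivWithinAt (hf : ConvexOn ℝ s f)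
    (hf' : HasFDerivWithinAt f f' s p) (hp : p ∈ s) :
    IsGreatest {r : ℝ | ∃ z ∈ s, r = f' z - f z} (f' p - f p) := by
  refine ⟨⟨p, hp, rfl⟩, ?_⟩
  rintro _ ⟨z, hz, rfl⟩
  have htangent := add_apply_sub_le_of_convexOn_of_hasFDerivWithinAt hf hf' hp hz
  rw [map_sub] at htangent
  linarith

end NormedSpace

section InnerProductSpace

variable {E : Type*} [NormedAddCommGroup E] [InnerProductSpace ℝ E]

theorem hasFDerivWithinAt_add_half_mul_norm_sq {H : E → ℝ} {s : Set E} {p g : E}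
    (hH : HasFDerivWithinAt H (innerSL ℝ g) s p) (L : ℝ) :
    HasFDerivWithinAt (fun z => H z + (1 / 2) * L * ‖z‖ ^ 2) (innerSL ℝ (g + L • p)) s p := by
  convert! hH.add ((hasFDerivWithinAt_id p s).norm_sq.const_mul ((1 / 2) * L)) using 1
  ext w
  simp only [map_add, map_smul, add_apply, smul_apply, smul_eq_mul, nsmul_eq_mul, Nat.cast_ofNat,
    id_eq, ContinuousLinearMap.comp_id]
  ring

theorem half_inner_sub_smul_add_legendre_eq (q p : E) (L h : ℝ) :
    (1 / 2) * ⟪q - L • p, p⟫ + (⟪p, -q + L • p⟫ - (h + (1 / 2) * L * ‖p‖ ^ 2)) =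
      -((1 / 2) * ⟪q, p⟫) - h := by
  simp only [inner_sub_left, inner_add_right, inner_neg_right, real_inner_smul_left,
    real_inner_smul_right, real_inner_self_eq_norm_sq, real_inner_comm q p]
  ring

theorem dual_action_integrand_independent_of_L_general {J : E → E} (hJ : ∀ w, J (J w) = -w)
    {H : E → ℝ} {s : Set E} {L : ℝ}
    (hconv : ConvexOn ℝ s (fun z => H z + (1 / 2) * L * ‖z‖ ^ 2))
    {p g : E} (hp : p ∈ s) (hH : HasFDerivWithinAt H (innerSL ℝ g) s p)
    {v y : E} (hv : v = J g) (hy : y = -(J v) + L • p) :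
    IsGreatest {r : ℝ | ∃ z ∈ s, r = ⟪z, y⟫ - (H z + (1 / 2) * L * ‖z‖ ^ 2)}
        (⟪p, y⟫ - (H p + (1 / 2) * L * ‖p‖ ^ 2)) ∧
      (1 / 2) * ⟪J v - L • p, p⟫ + (⟪p, y⟫ - (H p + (1 / 2) * L * ‖p‖ ^ 2)) =
        -((1 / 2) * ⟪J v, p⟫) - H p := by
  have hy_grad : y = g + L • p := by rw [hy, hv, hJ, neg_neg]
  constructor
  · have hderiv := hasFDerivWithinAt_add_half_mul_norm_sq hH L
    simpa only [innerSL_apply_apply, ← hy_grad, real_inner_comm] using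
      isGreatest_apply_sub_of_convexOn_of_hasFDerivWithinAt hconv hderiv hp
  · rw [hy]
    exact half_inner_sub_smul_add_legendre_eq (J v) p L (H p)

end InnerProductSpace

/-- Proposition 2.8 (computation (2.7)): along a solution of `ẋ = J∇H(x)`, the
supremum defining the Fenchel dual `H_L*(-Jẋ + Lx)` is attained at `x(t)` and
the integrand of the dual action functional is independent of `L`. -/
theorem dual_action_integrand_independent_of_L (n : ℕ)
    (H : EuclideanSpace ℝ (Fin (2 * n)) → ℝ) (hH : Differentiable ℝ H)
    (L : ℝ)
    (hconv : ConvexOn ℝ Set.univ (fun z => H z + (1/2) * L * ‖z‖ ^ 2))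
    (x : ℝ → EuclideanSpace ℝ (Fin (2 * n)))
    (hx : ∀ t, HasDerivAt x (symplJ n (gradient H (x t))) t) :
    ∀ t : ℝ, ∀ v y : EuclideanSpace ℝ (Fin (2 * n)),
      v = symplJ n (gradient H (x t)) →
      y = -(symplJ n v) + L • x t →
      IsGreatest {r : ℝ | ∃ z, r = ⟪z, y⟫ - (H z + (1/2) * L * ‖z‖ ^ 2)}
        (⟪x t, y⟫ - (H (x t) + (1/2) * L * ‖x t‖ ^ 2)) ∧
      (1/2) * ⟪symplJ n v - L • x t, x t⟫ +
          (⟪x t, y⟫ - (H (x t) + (1/2) * L * ‖x t‖ ^ 2)) =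
        -((1/2) * ⟪symplJ n v, x t⟫) - H (x t) := by
  intro t v y hv hy
  simpa only [Set.mem_univ, true_and] using
    dual_action_integrand_independent_of_L_general (symplJ_symplJ n) hconv (Set.mem_univ (x t))
      (hH (x t)).hasGradientAt.hasFDerivAt.hasFDerivWithinAt hv hy
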